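/- Let d > 2 be an integer, J an admissible kernel on ℤ^d, and G ∈ 𝒢 with (J,G) satisfying Assumption G. Then for every 0 ≤ β' ≤ β < β_c: (i) (β−β')·(1−E(β)) ≤ 1/χ(β') − 1/χ(β) ≤ β−β'; (ii) if E(β) < 1, then (χ(β')/χ(β))^{(1+E(β))/(1−E(β))} ≤ (ξ(β')/ξ(β))² ≤ (χ(β')/χ(β))^{1−2E(β)}; and (iii) in particular, if E(β) ≤ 1/2 then ξ(β') ≤ ξ(β). -/

import Mathlib

open scoped ENNReal

noncomputable section

namespace Blackbox

/-- Supremum norm of a lattice point. -/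
def supNorm {d : ℕ} (x : Fin d → ℤ) : ℝ :=
  ((Finset.univ.sup fun i => (x i).natAbs : ℕ) : ℝ)

/-- Squared Euclidean norm of a lattice point. -/
def sqNorm {d : ℕ} (x : Fin d → ℤ) : ℝ :=
  ∑ i, ((x i : ℝ)) ^ 2

/-- Invariance under coordinate permutations and sign flips of individual coordinates. -/
def IsSymmFun {d : ℕ} {α : Type*} (f : (Fin d → ℤ) → α) : Prop :=
  ∀ (π : Equiv.Perm (Fin d)) (e : Fin d → Bool) (x : Fin d → ℤ),
    f (fun i => (if e i then -1 else 1) * x (π i)) = f x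

/-- First coordinate (dot product with `e₁`). -/
def e1 {d : ℕ} {α : Type*} [Zero α] (y : Fin d → α) : α :=
  if h : 0 < d then y ⟨0, h⟩ else 0

/-- An admissible kernel on `ℤ^d` with constant `c₀`. -/
structure AdmissibleKernel (d : ℕ) (c₀ : ℝ) where
  J : (Fin d → ℤ) → ℝ
  nonneg : ∀ x, 0 ≤ J x
  zero_at_zero : J 0 = 0
  summable : Summable J
  norm_one : ∑' x, J x = 1
  symm : IsSymmFun J
  R : ℝ
  R_ge_one : 1 ≤ R
  range_le : ∀ x, 0 < J x → supNorm x ≤ R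
  range_attained : ∃ x, 0 < J x ∧ supNorm x = R
  summable_sq : Summable fun x => sqNorm x * J x
  sigma_lower : c₀ * R ≤ Real.sqrt (∑' x, sqNorm x * J x)
  J_upper : ∀ x, J x ≤ c₀⁻¹ / R ^ d

/-- `σ_J`, the square root of the variance of the kernel. -/
def AdmissibleKernel.sigma {d : ℕ} {c₀ : ℝ} (K : AdmissibleKernel d c₀) : ℝ :=
  Real.sqrt (∑' x, sqNorm x * K.J x)

/-- A family `G ∈ 𝒢` together with an admissible kernel `J` such that `(J,G)` satisfies
Assumption G (with error-term family `H`). -/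
structure Model (d : ℕ) (c₀ : ℝ) where
  K : AdmissibleKernel d c₀
  G : ℝ → (Fin d → ℤ) → ℝ≥0∞
  βc : ℝ≥0∞
  βc_pos : 0 < βc
  init : ∀ x, G 0 x = if x = 0 then 1 else 0
  G' : ℝ → (Fin d → ℤ) → ℝ
  mono : ∀ (x : Fin d → ℤ) ⦃β₁ β₂ : ℝ⦄, 0 ≤ β₁ → β₁ ≤ β₂ →
    ENNReal.ofReal β₂ ≤ βc → G β₁ x ≤ G β₂ x
  deriv : ∀ (x : Fin d → ℤ) ⦃β : ℝ⦄, 0 ≤ β → ENNReal.ofReal β < βc →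
    HasDerivWithinAt (fun t => (G t x).toReal) (G' β x) (Set.Ici 0) β
  symm : ∀ β, IsSymmFun (G β)
  expDecay : ∀ ⦃β : ℝ⦄, 0 ≤ β → ENNReal.ofReal β < βc →
    ∃ C > (0:ℝ), ∃ c > (0:ℝ), ∀ x, G β x ≤ ENNReal.ofReal (C * Real.exp (-c * supNorm x))
  limit : βc ≠ ⊤ → ∀ x, G βc.toReal x = ⨆ β ∈ Set.Ico (0 : ℝ) βc.toReal, G β x
  I1 : ∀ ⦃β' β : ℝ⦄, 0 ≤ β' → β' ≤ β → ENNReal.ofReal β < βc →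
    ∀ x, G β x ≤ G β' x + ENNReal.ofReal (β - β') *
      ∑' p : (Fin d → ℤ) × (Fin d → ℤ),
        G β' p.1 * ENNReal.ofReal (K.J p.2) * G β (x - p.1 - p.2)
  H : ℝ → (Fin d → ℤ) → ℝ
  H_nonneg : ∀ β x, 0 ≤ H β x
  H_zero : ∀ x, H 0 x = 0
  H_symm : ∀ β x, H β (-x) = H β x
  H_cont : ∀ x, ContinuousOn (fun β => H β x)
    {β : ℝ | 0 ≤ β ∧ ENNReal.ofReal β < βc}
  H_expDecay : ∀ ⦃β : ℝ⦄, 0 ≤ β → ENNReal.ofReal β < βc →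
    ∃ C > (0:ℝ), ∃ c > (0:ℝ), ∀ x, H β x ≤ C * Real.exp (-c * supNorm x)
  I2 : ∀ ⦃β : ℝ⦄, 0 ≤ β → ENNReal.ofReal β < βc → ∀ x,
    (∑' p : (Fin d → ℤ) × (Fin d → ℤ),
      (G β p.1).toReal * (K.J p.2 - H β p.2) * (G β (x - p.1 - p.2)).toReal)
      ≤ G' β x

namespace Model

variable {d : ℕ} {c₀ : ℝ}

def sigma (M : Model d c₀) : ℝ := M.K.sigma

/-- `F_β = J * G_β`. -/
def F (M : Model d c₀) (β : ℝ) (x : Fin d → ℤ) : ℝ≥0∞ :=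
  ∑' y, ENNReal.ofReal (M.K.J y) * M.G β (x - y)

/-- The susceptibility `χ(β)`. -/
def chi (M : Model d c₀) (β : ℝ) : ℝ≥0∞ := ∑' x, M.G β x

/-- `ξ(β)²`. -/
def xiSq (M : Model d c₀) (β : ℝ) : ℝ≥0∞ :=
  (∑' x, ENNReal.ofReal (sqNorm x) * M.F β x) / M.chi β

/-- The correlation length of order two, `ξ(β)`. -/
def xi (M : Model d c₀) (β : ℝ) : ℝ := Real.sqrt (M.xiSq β).toReal

/-- The error term `E(β)`. -/
def E (M : Model d c₀) (β : ℝ) : ℝ≥0∞ :=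
  ⨆ t ∈ Set.Icc (0 : ℝ) β,
    (ENNReal.ofReal (∑' x, M.H t x) +
      ENNReal.ofReal (∑' x, sqNorm x * M.H t x) / M.xiSq t)

/-- `β(δ)`. -/
def betaOf (M : Model d c₀) (δ : ℝ) : ℝ :=
  sSup {β : ℝ | 0 ≤ β ∧ ENNReal.ofReal β < M.βc ∧ M.E β < ENNReal.ofReal δ}

/-- One-step distribution of the effective random walk at parameter `β`. -/
def effStep (M : Model d c₀) (β : ℝ) (y : Fin d → ℤ) : ℝ≥0∞ :=
  M.F β y / M.chi β

/-- `k`-step distribution of the effective random walk at parameter `β`. -/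
def effIter (M : Model d c₀) (β : ℝ) : ℕ → (Fin d → ℤ) → ℝ≥0∞
  | 0 => fun x => if x = 0 then 1 else 0
  | n + 1 => fun x => ∑' y, M.effStep β y * M.effIter β n (x - y)

/-- Moment generating function `M_β(s)` of the first coordinate of one step of the
effective random walk. -/
def Mgf (M : Model d c₀) (β s : ℝ) : ℝ≥0∞ :=
  ∑' y : Fin d → ℤ, M.effStep β y * ENNReal.ofReal (Real.exp (s / M.xi β * ((e1 y : ℤ) : ℝ)))

end Model

end Blackbox
open Blackbox

/-!
The two inequalities of Assumption G pinch `∂_t G_t` between `G_t * (J - H_t) * G_t` and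
`G_t * J * G_t`. For even functions the parallelogram law makes second moments behave under
convolution like variances of independent variables, so summing these bounds against `1` and
against `|x|²` pinches the derivatives of the susceptibility `χ` and of the second moment `B` of
`F = J * G`: with `E = E(β)`, the logarithmic derivative of `χ` lies between `(1 - E) χ` and `χ`,
and that of `B` between `2 (1 - E) χ` and `2 χ`. The first pair of bounds integrates to the
inequalities for `1 / χ`. Since `ξ² = B / χ`, subtracting the two pairs compares the logarithmic
derivatives of `ξ²` and of `χ`, which integrates to the inequalities for `ξ²`.
-/

namespace Blackbox

open DiscreteConvolution Filter Set Topology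

local infixl:70 " ⋆ " => addConvolution (LinearMap.mul ℝ ℝ)

theorem summable_mul_prod {X Y : Type*} {f : X → ℝ} {g : Y → ℝ} (hf : Summable f)
    (hg : Summable g) : Summable fun p : X × Y => f p.1 * g p.2 :=
  summable_mul_of_summable_norm hf.norm hg.norm

theorem summable_mul_comp {X Y : Type*} {f : X → ℝ} {g : Y → ℝ} (hf : Summable f)
    (hg : Summable g) (φ : X → Y) : Summable fun x => f x * g (φ x) := by
  have bound (y : Y) : ‖g y‖ ≤ ∑' z, ‖g z‖ := hg.norm.le_tsum y fun _ _ => norm_nonneg _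
  refine .of_norm_bounded (hf.norm.mul_right (∑' z, ‖g z‖)) fun x => ?_
  rw [norm_mul]
  exact mul_le_mul_of_nonneg_left (bound _) (norm_nonneg _)

section Convolution

variable {A : Type*} [AddCommGroup A] {f g k w : A → ℝ} {s : ℝ}

theorem addConvolution_mul_apply (f g : A → ℝ) (x : A) :
    (f ⋆ g) x = ∑' y, f y * g (x - y) := by
  let e : A ≃ addFiber x :=
    { toFun y := ⟨(y, x - y), mem_addFiber.2 (add_sub_cancel y x)⟩
      invFun p := p.1.1
      left_inv _ := rfl
      right_inv p := Subtype.ext (Prod.ext rfl (sub_eq_of_eq_add' (mem_addFiber.1 p.2).symm)) }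
  exact (e.tsum_eq fun p => f p.1.1 * g p.1.2).symm

theorem hasSum_mul_addConvolution (hf : Summable f) (hg : Summable g)
    (h : HasSum (fun p : A × A => w (p.1 + p.2) * (f p.1 * g p.2)) s) :
    HasSum (fun x => w x * (f ⋆ g) x) s := by
  let e : A × A ≃ A × A :=
    (Equiv.prodComm A A).trans (Equiv.prodShear (Equiv.refl A) fun y => Equiv.subRight y)
  refine (e.hasSum_iff.2 h).prod_fiberwise fun x => ?_
  rw [addConvolution_mul_apply]
  exact ((summable_mul_comp hf hg (x - ·)).hasSum.mul_left (w x)).congr_fun fun y => by simp [e]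

theorem even_addConvolution (hf : f.Even) (hg : g.Even) : (f ⋆ g).Even := fun x => by
  rw [addConvolution_mul_apply, addConvolution_mul_apply, ← (Equiv.neg A).tsum_eq]
  refine tsum_congr fun y => ?_
  rw [Equiv.neg_apply, hf y, ← hg (x - y), neg_sub_neg, neg_sub]

theorem hasSum_addConvolution_addConvolution (hf : Summable f) (hk : Summable k)
    (hg : Summable g) (x : A) :
    HasSum (fun p : A × A => f p.1 * k p.2 * g (x - p.1 - p.2)) ((f ⋆ k ⋆ g) x) := by
  have total : Summable fun p : A × A => f p.1 * k p.2 * g (x - (p.1 + p.2)) :=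
    summable_mul_comp (summable_mul_prod hf hk) hg _
  have inner := hasSum_mul_addConvolution (w := fun z => g (x - z)) hf hk
    (total.hasSum.congr_fun fun p => mul_comm _ _)
  rw [addConvolution_mul_apply]
  simp only [mul_comm ((f ⋆ k) _), inner.tsum_eq]
  exact total.hasSum.congr_fun fun p => by rw [sub_sub]

/-- A squared norm on an abelian group, axiomatised by positivity and the parallelogram law. -/
structure IsSquaredNorm (N : A → ℝ) : Prop where
  nonneg : ∀ x, 0 ≤ N x
  parallelogram : ∀ x y, N (x + y) + N (x - y) = 2 * N x + 2 * N y

/-- `f` is even, with zeroth moment `m₀` and second moment `m₂` with respect to `N`. -/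
structure HasMoments (N f : A → ℝ) (m₀ m₂ : ℝ) : Prop where
  even : f.Even
  hasSum : HasSum f m₀
  hasSum_mul : HasSum (fun x => N x * f x) m₂

namespace HasMoments

variable {N : A → ℝ} {m₀ m₂ n₀ n₂ : ℝ}

theorem sub (hf : HasMoments N f m₀ m₂) (hg : HasMoments N g n₀ n₂) :
    HasMoments N (f - g) (m₀ - n₀) (m₂ - n₂) where
  even x := by simp only [Pi.sub_apply, hf.even x, hg.even x]
  hasSum := hf.hasSum.sub hg.hasSum
  hasSum_mul := by simpa only [Pi.sub_apply, mul_sub] using hf.hasSum_mul.sub hg.hasSum_mul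

/-- Flipping the sign of the second variable turns `N (y + z)` into `N (y - z)`, and the
parallelogram law evaluates the sum of the two. -/
theorem hasSum_add_mul (hN : IsSquaredNorm N) (hf : HasMoments N f m₀ m₂)
    (hg : HasMoments N g n₀ n₂) :
    HasSum (fun p : A × A => N (p.1 + p.2) * (f p.1 * g p.2)) (m₂ * n₀ + m₀ * n₂) := by
  have doubled : HasSum (fun p : A × A => (2 * N p.1 + 2 * N p.2) * (f p.1 * g p.2))
      (2 * (m₂ * n₀ + m₀ * n₂)) := by
    have left := hf.hasSum_mul.mul hg.hasSum
      (summable_mul_prod hf.hasSum_mul.summable hg.hasSum.summable)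
    have right := hf.hasSum.mul hg.hasSum_mul
      (summable_mul_prod hf.hasSum.summable hg.hasSum_mul.summable)
    exact ((left.add right).mul_left 2).congr_fun fun p => by ring
  have summable : Summable fun p : A × A => N (p.1 + p.2) * (f p.1 * g p.2) :=
    .of_norm_bounded doubled.summable.norm fun p => by
      rw [norm_mul, norm_mul _ (f p.1 * g p.2)]
      refine mul_le_mul_of_nonneg_right ?_ (norm_nonneg _)
      rw [← hN.parallelogram, Real.norm_of_nonneg (hN.nonneg _)]
      exact (le_add_of_nonneg_right (hN.nonneg _)).trans (le_abs_self _)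
  have flipped : HasSum (fun p : A × A => N (p.1 - p.2) * (f p.1 * g p.2)) (∑' p : A × A, _) :=
    (((Equiv.refl A).prodCongr (Equiv.neg A)).hasSum_iff.2 summable.hasSum).congr_fun fun p => by
      simp [hg.even p.2, sub_eq_add_neg]
  have total : HasSum (fun p : A × A => (2 * N p.1 + 2 * N p.2) * (f p.1 * g p.2)) _ :=
    (summable.hasSum.add flipped).congr_fun fun p => by rw [← add_mul, hN.parallelogram]
  convert summable.hasSum using 1
  linarith [total.unique doubled]

theorem addConvolution (hN : IsSquaredNorm N) (hf : HasMoments N f m₀ m₂)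
    (hg : HasMoments N g n₀ n₂) :
    HasMoments N (f ⋆ g) (m₀ * n₀) (m₂ * n₀ + m₀ * n₂) := by
  have hf' := hf.hasSum.summable
  have hg' := hg.hasSum.summable
  refine ⟨even_addConvolution hf.even hg.even, ?_,
    hasSum_mul_addConvolution hf' hg' (hf.hasSum_add_mul hN hg)⟩
  simpa using hasSum_mul_addConvolution (w := fun _ => 1) hf' hg'
    (by simpa using hf.hasSum.mul hg.hasSum (summable_mul_prod hf' hg'))

theorem addConvolution_addConvolution (hN : IsSquaredNorm N) (hg : HasMoments N g n₀ n₂)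
    (hk : HasMoments N k m₀ m₂) :
    HasMoments N (g ⋆ k ⋆ g) (m₀ * n₀ ^ 2) (m₂ * n₀ ^ 2 + 2 * m₀ * n₀ * n₂) := by
  convert (hg.addConvolution hN hk).addConvolution hN hg using 1 <;> ring

end HasMoments

end Convolution

section Lattice

variable {n : ℕ}

theorem supNorm_eq_norm (x : Fin n → ℤ) : supNorm x = ‖x‖ := by
  refine le_antisymm ?_ ((pi_norm_le_iff_of_nonneg (Nat.cast_nonneg _)).2 fun i => ?_)
  · obtain hn | hn := isEmpty_or_nonempty (Fin n)
    · simp [supNorm]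
    obtain ⟨i, -, hi⟩ := Finset.univ.exists_mem_eq_sup Finset.univ_nonempty fun i => (x i).natAbs
    rw [supNorm, hi, Nat.cast_natAbs, Int.cast_abs, ← Int.norm_eq_abs]
    exact norm_le_pi_norm x i
  · rw [Int.norm_eq_abs, ← Int.cast_abs, ← Nat.cast_natAbs, Nat.cast_le]
    exact Finset.le_sup (f := fun i => (x i).natAbs) (Finset.mem_univ i)

theorem isSquaredNorm_sqNorm : IsSquaredNorm (sqNorm : (Fin n → ℤ) → ℝ) where
  nonneg x := Finset.sum_nonneg fun i _ => sq_nonneg _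
  parallelogram x y := by
    simp only [sqNorm, Finset.mul_sum, ← Finset.sum_add_distrib]
    exact Finset.sum_congr rfl fun i _ => by simp only [Pi.add_apply, Pi.sub_apply]; push_cast; ring

theorem sqNorm_le (x : Fin n → ℤ) : sqNorm x ≤ n * ‖x‖ ^ 2 := by
  have coordinate (i : Fin n) : (x i : ℝ) ^ 2 ≤ ‖x‖ ^ 2 := by
    rw [← sq_abs, ← Int.norm_eq_abs]
    exact pow_le_pow_left₀ (norm_nonneg _) (norm_le_pi_norm x i) 2
  simpa [sqNorm] using Finset.sum_le_card_nsmul Finset.univ _ _ fun i _ => coordinate i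

theorem summable_prod_apply {α : Type*} {f : α → ℝ} (hf : Summable f) :
    ∀ n : ℕ, Summable fun x : Fin n → α => ∏ i, f (x i)
  | 0 => .of_finite
  | n + 1 => by
    refine ((Fin.consEquiv fun _ => α).summable_iff).1 ?_
    simpa [Function.comp_def, Fin.prod_univ_succ] using
      summable_mul_prod hf (summable_prod_apply hf n)

theorem summable_exp_neg_mul_norm_int {c : ℝ} (hc : 0 < c) :
    Summable fun k : ℤ => Real.exp (-c * ‖k‖) := by
  have half : Summable fun k : ℕ => Real.exp (-c * k) := by
    simpa only [mul_comm] using Real.summable_exp_nat_mul_iff.2 (neg_lt_zero.2 hc)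
  exact .of_nat_of_neg (by simpa using half) (by simpa using half)

theorem summable_exp_neg_mul_norm {c : ℝ} (hc : 0 < c) :
    Summable fun x : Fin n → ℤ => Real.exp (-c * ‖x‖) := by
  have hc' : 0 < c / (n + 1) := by positivity
  refine .of_nonneg_of_le (fun x => (Real.exp_pos _).le) (fun x => ?_)
    (summable_prod_apply (summable_exp_neg_mul_norm_int hc') n)
  have norm_sum : ∑ i, ‖x i‖ ≤ (n + 1) * ‖x‖ := by
    have := Finset.sum_le_card_nsmul Finset.univ (fun i => ‖x i‖) ‖x‖ fun i _ => norm_le_pi_norm x i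
    simp only [Finset.card_univ, Fintype.card_fin, nsmul_eq_mul] at this
    linarith [norm_nonneg x]
  rw [← Real.exp_sum, Real.exp_le_exp, ← Finset.mul_sum, neg_mul, neg_mul, neg_le_neg_iff,
    div_mul_eq_mul_div, div_le_iff₀ (by positivity)]
  nlinarith

theorem summable_pow_norm_mul_exp {c : ℝ} (hc : 0 < c) (k : ℕ) :
    Summable fun x : Fin n → ℤ => ‖x‖ ^ k * Real.exp (-c * ‖x‖) := by
  refine .of_nonneg_of_le (fun x => by positivity) (fun x => ?_)
    ((summable_exp_neg_mul_norm (half_pos hc)).mul_left (k.factorial * (2 / c) ^ k))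
  have power : (c / 2 * ‖x‖) ^ k / k.factorial ≤ Real.exp (c / 2 * ‖x‖) :=
    Real.pow_div_factorial_le_exp _ (by positivity) k
  have split : Real.exp (-c * ‖x‖) = Real.exp (-(c / 2) * ‖x‖) / Real.exp (c / 2 * ‖x‖) := by
    rw [← Real.exp_sub]; ring_nf
  rw [split, mul_div_assoc', div_le_iff₀ (Real.exp_pos _)]
  calc ‖x‖ ^ k * Real.exp (-(c / 2) * ‖x‖)
      = k.factorial * (2 / c) ^ k * Real.exp (-(c / 2) * ‖x‖) *
          ((c / 2 * ‖x‖) ^ k / k.factorial) := by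
        rw [mul_pow, div_pow, div_pow]; field_simp
    _ ≤ _ := mul_le_mul_of_nonneg_left power (by positivity)

theorem hasMoments_of_le_exp {f : (Fin n → ℤ) → ℝ} {C c : ℝ} (hc : 0 < c) (even : f.Even)
    (nonneg : ∀ x, 0 ≤ f x) (le_exp : ∀ x, f x ≤ C * Real.exp (-c * supNorm x)) :
    HasMoments sqNorm f (∑' x, f x) (∑' x, sqNorm x * f x) := by
  simp only [supNorm_eq_norm] at le_exp
  refine ⟨even, (Summable.of_nonneg_of_le nonneg le_exp
    ((summable_exp_neg_mul_norm hc).mul_left C)).hasSum, Summable.hasSum ?_⟩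
  refine .of_nonneg_of_le (fun x => mul_nonneg (isSquaredNorm_sqNorm.nonneg x) (nonneg x))
    (fun x => ?_) ((summable_pow_norm_mul_exp hc 2).mul_left (n * C))
  calc sqNorm x * f x ≤ n * ‖x‖ ^ 2 * (C * Real.exp (-c * ‖x‖)) :=
        mul_le_mul (sqNorm_le x) (le_exp x) (nonneg x) (by positivity)
    _ = n * C * (‖x‖ ^ 2 * Real.exp (-c * ‖x‖)) := by ring

end Lattice

section Calculus

theorem hasDerivWithinAt_tsum_of_lipschitz {ι : Type*} {f : ι → ℝ → ℝ} {f' u : ι → ℝ} {s : Set ℝ}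
    {t : ℝ} (hu : Summable u) (hf : Summable fun i => f i t)
    (hasDeriv : ∀ i, HasDerivWithinAt (f i) (f' i) s t)
    (lipschitz : ∀ i, ∀ r ∈ s, |f i r - f i t| ≤ u i * |r - t|) :
    HasDerivWithinAt (fun r => ∑' i, f i r) (∑' i, f' i) s t := by
  have slope_tsum {r : ℝ} (hr : r ∈ s) :
      ∑' i, slope (f i) t r = slope (fun r => ∑' i, f i r) t r := by
    have increment : Summable fun i => f i r - f i t :=
      .of_norm_bounded (hu.mul_right _) fun i => lipschitz i r hr
    have hfr : Summable fun i => f i r := by simpa using increment.add hf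
    simp only [slope_def_field, tsum_div_const, hfr.tsum_sub hf]
  have slope_le {r : ℝ} (hr : r ∈ s \ {t}) (i : ι) : ‖slope (f i) t r‖ ≤ u i := by
    rw [slope_def_field, norm_div, Real.norm_eq_abs, Real.norm_eq_abs,
      div_le_iff₀ (abs_pos.2 (sub_ne_zero.2 hr.2))]
    exact lipschitz i r hr.1
  rw [hasDerivWithinAt_iff_tendsto_slope]
  refine (tendsto_tsum_of_dominated_convergence hu
    (fun i => hasDerivWithinAt_iff_tendsto_slope.1 (hasDeriv i))
    (eventually_mem_nhdsWithin.mono fun r hr => slope_le hr)).congr' ?_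
  exact eventually_mem_nhdsWithin.mono fun r hr => slope_tsum hr.1

theorem logDeriv_rpow_const {f : ℝ → ℝ} {t : ℝ} (hf : DifferentiableAt ℝ f t) (ht : 0 < f t)
    (c : ℝ) : logDeriv (fun s => f s ^ c) t = c * logDeriv f t := by
  rw [logDeriv_apply, logDeriv_apply, (hf.hasDerivAt.rpow_const (Or.inl ht.ne')).deriv,
    Real.rpow_sub_one ht.ne']
  field_simp

/-- `f` is continuous and positive on `[a, b]` and differentiable inside: such functions are
compared through their logarithmic derivatives. -/
structure IsPosDiffOn (f : ℝ → ℝ) (a b : ℝ) : Prop where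
  continuousOn : ContinuousOn f (Icc a b)
  differentiableAt : ∀ t ∈ Ioo a b, DifferentiableAt ℝ f t
  pos : ∀ t ∈ Icc a b, 0 < f t

namespace IsPosDiffOn

variable {f g : ℝ → ℝ} {a b c : ℝ}

theorem of_hasDerivWithinAt {f' : ℝ → ℝ}
    (hf : ∀ t ∈ Icc a b, HasDerivWithinAt f (f' t) (Icc a b) t) (pos : ∀ t ∈ Icc a b, 0 < f t) :
    IsPosDiffOn f a b where
  continuousOn t ht := (hf t ht).continuousWithinAt
  differentiableAt t ht :=
    ((hf t (Ioo_subset_Icc_self ht)).hasDerivAt (Icc_mem_nhds ht.1 ht.2)).differentiableAt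
  pos := pos

theorem mono_left (hf : IsPosDiffOn f a b) (hac : a ≤ c) : IsPosDiffOn f c b where
  continuousOn := hf.continuousOn.mono (Icc_subset_Icc_left hac)
  differentiableAt t ht := hf.differentiableAt t (Ioo_subset_Ioo_left hac ht)
  pos t ht := hf.pos t (Icc_subset_Icc_left hac ht)

theorem div (hf : IsPosDiffOn f a b) (hg : IsPosDiffOn g a b) :
    IsPosDiffOn (fun t => f t / g t) a b where
  continuousOn := hf.continuousOn.div hg.continuousOn fun t ht => (hg.pos t ht).ne'
  differentiableAt t ht := (hf.differentiableAt t ht).fun_div (hg.differentiableAt t ht)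
    (hg.pos t (Ioo_subset_Icc_self ht)).ne'
  pos t ht := div_pos (hf.pos t ht) (hg.pos t ht)

theorem rpow_const (hf : IsPosDiffOn f a b) (c : ℝ) : IsPosDiffOn (fun t => f t ^ c) a b where
  continuousOn := hf.continuousOn.rpow_const fun t ht => Or.inl (hf.pos t ht).ne'
  differentiableAt t ht := (hf.differentiableAt t ht).rpow_const
    (Or.inl (hf.pos t (Ioo_subset_Icc_self ht)).ne')
  pos t ht := Real.rpow_pos_of_pos (hf.pos t ht) c

theorem logDeriv_div (hf : IsPosDiffOn f a b) (hg : IsPosDiffOn g a b) {t : ℝ}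
    (ht : t ∈ Ioo a b) :
    logDeriv (fun t => f t / g t) t = logDeriv f t - logDeriv g t :=
  _root_.logDeriv_div t (hf.pos t (Ioo_subset_Icc_self ht)).ne'
    (hg.pos t (Ioo_subset_Icc_self ht)).ne' (hf.differentiableAt t ht) (hg.differentiableAt t ht)

theorem antitoneOn_of_logDeriv_nonpos (hf : IsPosDiffOn f a b)
    (h : ∀ t ∈ Ioo a b, logDeriv f t ≤ 0) : AntitoneOn f (Icc a b) := by
  refine antitoneOn_of_deriv_nonpos (convex_Icc a b) hf.continuousOn ?_ ?_ <;>
    rw [interior_Icc] <;> intro t ht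
  · exact (hf.differentiableAt t ht).differentiableWithinAt
  · simpa [logDeriv_apply, div_nonpos_iff, (hf.pos t (Ioo_subset_Icc_self ht)).not_ge,
      (hf.pos t (Ioo_subset_Icc_self ht)).le] using h t ht

theorem div_le_div_of_logDeriv_le (hab : a ≤ b) (hf : IsPosDiffOn f a b)
    (hg : IsPosDiffOn g a b) (h : ∀ t ∈ Ioo a b, logDeriv f t ≤ logDeriv g t) :
    g a / g b ≤ f a / f b := by
  have antitone : f b / g b ≤ f a / g a :=
    (hf.div hg).antitoneOn_of_logDeriv_nonpos
      (fun t ht => (hf.logDeriv_div hg ht).trans_le (sub_nonpos.2 (h t ht)))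
      (left_mem_Icc.2 hab) (right_mem_Icc.2 hab) hab
  rw [div_le_div_iff₀ (hg.pos b (right_mem_Icc.2 hab)) (hg.pos a (left_mem_Icc.2 hab))] at antitone
  rw [div_le_div_iff₀ (hg.pos b (right_mem_Icc.2 hab)) (hf.pos b (right_mem_Icc.2 hab))]
  linarith

theorem div_rpow_le_div (hab : a ≤ b) (hf : IsPosDiffOn f a b) (hg : IsPosDiffOn g a b)
    (h : ∀ t ∈ Ioo a b, logDeriv f t ≤ c * logDeriv g t) :
    (g a / g b) ^ c ≤ f a / f b := by
  rw [Real.div_rpow (hg.pos a (left_mem_Icc.2 hab)).le (hg.pos b (right_mem_Icc.2 hab)).le]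
  refine hf.div_le_div_of_logDeriv_le hab (hg.rpow_const c) fun t ht => ?_
  rw [logDeriv_rpow_const (hg.differentiableAt t ht) (hg.pos t (Ioo_subset_Icc_self ht))]
  exact h t ht

theorem div_le_div_rpow (hab : a ≤ b) (hf : IsPosDiffOn f a b) (hg : IsPosDiffOn g a b)
    (h : ∀ t ∈ Ioo a b, c * logDeriv g t ≤ logDeriv f t) :
    f a / f b ≤ (g a / g b) ^ c := by
  rw [Real.div_rpow (hg.pos a (left_mem_Icc.2 hab)).le (hg.pos b (right_mem_Icc.2 hab)).le]
  refine (hg.rpow_const c).div_le_div_of_logDeriv_le hab hf fun t ht => ?_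
  rw [logDeriv_rpow_const (hg.differentiableAt t ht) (hg.pos t (Ioo_subset_Icc_self ht))]
  exact h t ht

theorem hasDerivAt_neg_inv (hf : IsPosDiffOn f a b) {t : ℝ} (ht : t ∈ Ioo a b) :
    HasDerivAt (fun t => -(f t)⁻¹) (logDeriv f t / f t) t := by
  have hft := (hf.pos t (Ioo_subset_Icc_self ht)).ne'
  refine ((hf.differentiableAt t ht).hasDerivAt.inv hft).neg.congr_deriv ?_
  rw [logDeriv_apply]
  field_simp

theorem continuousOn_neg_inv (hf : IsPosDiffOn f a b) :
    ContinuousOn (fun t => -(f t)⁻¹) (Icc a b) :=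
  (hf.continuousOn.inv₀ fun t ht => (hf.pos t ht).ne').neg

theorem differentiableOn_neg_inv (hf : IsPosDiffOn f a b) :
    DifferentiableOn ℝ (fun t => -(f t)⁻¹) (interior (Icc a b)) := by
  rw [interior_Icc]
  exact fun t ht => (hf.hasDerivAt_neg_inv ht).differentiableAt.differentiableWithinAt

theorem mul_sub_le_inv_sub_inv (hab : a ≤ b) (hf : IsPosDiffOn f a b)
    (h : ∀ t ∈ Ioo a b, c * f t ≤ logDeriv f t) : c * (b - a) ≤ (f a)⁻¹ - (f b)⁻¹ := by
  have le_deriv : ∀ t ∈ interior (Icc a b), c ≤ deriv (fun t => -(f t)⁻¹) t := by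
    rw [interior_Icc]
    intro t ht
    rw [(hf.hasDerivAt_neg_inv ht).deriv, le_div_iff₀ (hf.pos t (Ioo_subset_Icc_self ht))]
    exact h t ht
  linarith [(convex_Icc a b).mul_sub_le_image_sub_of_le_deriv hf.continuousOn_neg_inv
    hf.differentiableOn_neg_inv le_deriv a (left_mem_Icc.2 hab) b (right_mem_Icc.2 hab) hab]

theorem inv_sub_inv_le_mul_sub (hab : a ≤ b) (hf : IsPosDiffOn f a b)
    (h : ∀ t ∈ Ioo a b, logDeriv f t ≤ c * f t) : (f a)⁻¹ - (f b)⁻¹ ≤ c * (b - a) := by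
  have deriv_le : ∀ t ∈ interior (Icc a b), deriv (fun t => -(f t)⁻¹) t ≤ c := by
    rw [interior_Icc]
    intro t ht
    rw [(hf.hasDerivAt_neg_inv ht).deriv, div_le_iff₀ (hf.pos t (Ioo_subset_Icc_self ht))]
    exact h t ht
  linarith [(convex_Icc a b).image_sub_le_mul_sub_of_deriv_le hf.continuousOn_neg_inv
    hf.differentiableOn_neg_inv deriv_le a (left_mem_Icc.2 hab) b (right_mem_Icc.2 hab) hab]

end IsPosDiffOn

end Calculus

theorem IsSymmFun.even {d : ℕ} {α : Type*} {f : (Fin d → ℤ) → α} (hf : IsSymmFun f) :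
    f.Even := fun x => by
  simpa [← Pi.neg_def] using hf 1 (fun _ => true) x

namespace AdmissibleKernel

variable {d : ℕ} {c₀ : ℝ}

theorem constant_pos (K : AdmissibleKernel d c₀) : 0 < c₀ := by
  obtain ⟨x, hx, -⟩ := K.range_attained
  have pow_pos : 0 < K.R ^ d := pow_pos (zero_lt_one.trans_le K.R_ge_one) d
  exact inv_pos.1 ((div_pos_iff_of_pos_right pow_pos).1 (hx.trans_le (K.J_upper x)))

theorem sigma_pos (K : AdmissibleKernel d c₀) : 0 < K.sigma :=
  (mul_pos K.constant_pos (zero_lt_one.trans_le K.R_ge_one)).trans_le K.sigma_lower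

theorem hasMoments (K : AdmissibleKernel d c₀) : HasMoments sqNorm K.J 1 (K.sigma ^ 2) where
  even := K.symm.even
  hasSum := K.norm_one ▸ K.summable.hasSum
  hasSum_mul := by
    have nonneg : 0 ≤ ∑' x, sqNorm x * K.J x :=
      tsum_nonneg fun x => mul_nonneg (isSquaredNorm_sqNorm.nonneg x) (K.nonneg x)
    rw [sigma, Real.sq_sqrt nonneg]
    exact K.summable_sq.hasSum

end AdmissibleKernel

namespace Model

variable {d : ℕ} {c₀ : ℝ} (M : Model d c₀) {s t a b : ℝ}

/-- `t` lies in `[0, β_c)`, where `G_t` decays exponentially. -/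
structure Subcritical (t : ℝ) : Prop where
  nonneg : 0 ≤ t
  lt_βc : ENNReal.ofReal t < M.βc

/-- The two-point function with values in `ℝ`, meaningful in the subcritical regime. -/
def realG (t : ℝ) (x : Fin d → ℤ) : ℝ := (M.G t x).toReal

/-- The susceptibility as a real number. -/
def realChi (t : ℝ) : ℝ := ∑' x, M.realG t x

/-- The second moment of `G_t`. -/
def secondMomentG (t : ℝ) : ℝ := ∑' x, sqNorm x * M.realG t x

/-- The second moment of `F_t = J * G_t`. -/
def secondMomentF (t : ℝ) : ℝ := ∑' x, sqNorm x * (M.K.J ⋆ M.realG t) x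

/-- The total mass of the error function `H_t`. -/
def massH (t : ℝ) : ℝ := ∑' x, M.H t x

/-- The second moment of the error function `H_t`. -/
def secondMomentH (t : ℝ) : ℝ := ∑' x, sqNorm x * M.H t x

/-- The quantity whose supremum over `t ∈ [0, β]` is `E(β)`. -/
def localError (t : ℝ) : ℝ :=
  M.massH t + M.secondMomentH t / (M.secondMomentF t / M.realChi t)

variable {M}

theorem Subcritical.of_le (hb : M.Subcritical b) (ht : 0 ≤ t) (htb : t ≤ b) : M.Subcritical t :=
  ⟨ht, (ENNReal.ofReal_le_ofReal htb).trans_lt hb.lt_βc⟩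

theorem realG_nonneg (t : ℝ) (x : Fin d → ℤ) : 0 ≤ M.realG t x := ENNReal.toReal_nonneg

theorem ofReal_realG (ht : M.Subcritical t) (x : Fin d → ℤ) :
    ENNReal.ofReal (M.realG t x) = M.G t x := by
  obtain ⟨C, -, c, -, hG⟩ := M.expDecay ht.nonneg ht.lt_βc
  exact ENNReal.ofReal_toReal ((hG x).trans_lt ENNReal.ofReal_lt_top).ne

theorem realG_le_realG (hs : 0 ≤ s) (hst : s ≤ t) (ht : M.Subcritical t) (x : Fin d → ℤ) :
    M.realG s x ≤ M.realG t x := by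
  rw [← ENNReal.ofReal_le_ofReal_iff (realG_nonneg t x), ofReal_realG (ht.of_le hs hst),
    ofReal_realG ht]
  exact M.mono x hs hst ht.lt_βc.le

theorem hasMoments_realG (ht : M.Subcritical t) :
    HasMoments sqNorm (M.realG t) (M.realChi t) (M.secondMomentG t) := by
  obtain ⟨C, hC, c, hc, hG⟩ := M.expDecay ht.nonneg ht.lt_βc
  refine hasMoments_of_le_exp hc (fun x => ?_) (realG_nonneg t) fun x =>
    ENNReal.toReal_le_of_le_ofReal (mul_pos hC (Real.exp_pos _)).le (hG x)
  rw [realG, (M.symm t).even x, realG]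

theorem hasMoments_H (ht : M.Subcritical t) :
    HasMoments sqNorm (M.H t) (M.massH t) (M.secondMomentH t) := by
  obtain ⟨C, -, c, hc, hH⟩ := M.H_expDecay ht.nonneg ht.lt_βc
  exact hasMoments_of_le_exp hc (M.H_symm t) (M.H_nonneg t) hH

theorem hasMoments_J_addConvolution_realG (ht : M.Subcritical t) :
    HasMoments sqNorm (M.K.J ⋆ M.realG t) (M.realChi t)
      (M.sigma ^ 2 * M.realChi t + M.secondMomentG t) := by
  simpa only [one_mul, sigma] using
    M.K.hasMoments.addConvolution isSquaredNorm_sqNorm (hasMoments_realG ht)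

theorem secondMomentF_eq (ht : M.Subcritical t) :
    M.secondMomentF t = M.sigma ^ 2 * M.realChi t + M.secondMomentG t :=
  (hasMoments_J_addConvolution_realG ht).hasSum_mul.tsum_eq

theorem massH_nonneg (t : ℝ) : 0 ≤ M.massH t := tsum_nonneg (M.H_nonneg t)

theorem secondMomentH_nonneg (t : ℝ) : 0 ≤ M.secondMomentH t :=
  tsum_nonneg fun x => mul_nonneg (isSquaredNorm_sqNorm.nonneg x) (M.H_nonneg t x)

theorem realChi_pos (ht : M.Subcritical t) : 0 < M.realChi t := by
  have realG_zero : M.realG 0 0 = 1 := by simp [realG, M.init]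
  calc (0 : ℝ) < M.realG 0 0 := realG_zero ▸ one_pos
    _ ≤ M.realG t 0 := realG_le_realG le_rfl ht.nonneg ht 0
    _ ≤ M.realChi t := (hasMoments_realG ht).hasSum.summable.le_tsum 0 fun x _ => realG_nonneg t x

theorem secondMomentF_pos (ht : M.Subcritical t) : 0 < M.secondMomentF t := by
  rw [secondMomentF_eq ht]
  exact add_pos_of_pos_of_nonneg (mul_pos (pow_pos M.K.sigma_pos 2) (realChi_pos ht))
    (tsum_nonneg fun x => mul_nonneg (isSquaredNorm_sqNorm.nonneg x) (realG_nonneg t x))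

theorem chi_eq_ofReal (ht : M.Subcritical t) : M.chi t = ENNReal.ofReal (M.realChi t) := by
  rw [realChi, ENNReal.ofReal_tsum_of_nonneg (realG_nonneg t)
    (hasMoments_realG ht).hasSum.summable]
  exact tsum_congr fun x => (ofReal_realG ht x).symm

theorem F_eq_ofReal (ht : M.Subcritical t) (x : Fin d → ℤ) :
    M.F t x = ENNReal.ofReal ((M.K.J ⋆ M.realG t) x) := by
  rw [addConvolution_mul_apply, ENNReal.ofReal_tsum_of_nonneg
    (fun y => mul_nonneg (M.K.nonneg y) (realG_nonneg t _))
    (summable_mul_comp M.K.summable (hasMoments_realG ht).hasSum.summable _)]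
  exact tsum_congr fun y => by rw [ENNReal.ofReal_mul (M.K.nonneg y), ofReal_realG ht]

theorem J_addConvolution_realG_nonneg (t : ℝ) (x : Fin d → ℤ) :
    0 ≤ (M.K.J ⋆ M.realG t) x := by
  rw [addConvolution_mul_apply]
  exact tsum_nonneg fun y => mul_nonneg (M.K.nonneg y) (realG_nonneg t _)

theorem xiSq_eq_ofReal (ht : M.Subcritical t) :
    M.xiSq t = ENNReal.ofReal (M.secondMomentF t / M.realChi t) := by
  rw [ENNReal.ofReal_div_of_pos (realChi_pos ht), ← chi_eq_ofReal ht, secondMomentF,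
    ENNReal.ofReal_tsum_of_nonneg
      (fun x => mul_nonneg (isSquaredNorm_sqNorm.nonneg x) (J_addConvolution_realG_nonneg t x))
      (hasMoments_J_addConvolution_realG ht).hasSum_mul.summable, xiSq]
  simp only [F_eq_ofReal ht, ENNReal.ofReal_mul (isSquaredNorm_sqNorm.nonneg _)]

theorem xi_eq_sqrt (ht : M.Subcritical t) :
    M.xi t = √(M.secondMomentF t / M.realChi t) := by
  rw [xi, xiSq_eq_ofReal ht,
    ENNReal.toReal_ofReal (div_pos (secondMomentF_pos ht) (realChi_pos ht)).le]

theorem xi_pos (ht : M.Subcritical t) : 0 < M.xi t :=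
  xi_eq_sqrt ht ▸ Real.sqrt_pos.2 (div_pos (secondMomentF_pos ht) (realChi_pos ht))

theorem sq_xi_div (hs : M.Subcritical s) (ht : M.Subcritical t) :
    (M.xi s / M.xi t) ^ 2 =
      M.secondMomentF s / M.realChi s / (M.secondMomentF t / M.realChi t) := by
  rw [div_pow, xi_eq_sqrt hs, xi_eq_sqrt ht,
    Real.sq_sqrt (div_pos (secondMomentF_pos hs) (realChi_pos hs)).le,
    Real.sq_sqrt (div_pos (secondMomentF_pos ht) (realChi_pos ht)).le]

theorem localError_le_toReal_E (hb : M.Subcritical b) (ht : 0 ≤ t) (htb : t ≤ b)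
    (hE : M.E b ≠ ⊤) : M.localError t ≤ (M.E b).toReal := by
  have ht' := hb.of_le ht htb
  have ratio_pos := div_pos (secondMomentF_pos ht') (realChi_pos ht')
  rw [← ENNReal.ofReal_le_iff_le_toReal hE, localError, ENNReal.ofReal_add (massH_nonneg t)
    (div_nonneg (secondMomentH_nonneg t) ratio_pos.le), ENNReal.ofReal_div_of_pos ratio_pos,
    ← xiSq_eq_ofReal ht']
  exact le_iSup₂ (f := fun t (_ : t ∈ Icc 0 b) => ENNReal.ofReal (M.massH t) +
    ENNReal.ofReal (M.secondMomentH t) / M.xiSq t) t ⟨ht, htb⟩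

theorem hasSum_realG_J_realG (ht : M.Subcritical t) (x : Fin d → ℤ) :
    HasSum (fun p : (Fin d → ℤ) × (Fin d → ℤ) =>
      M.realG t p.1 * M.K.J p.2 * M.realG t (x - p.1 - p.2))
      ((M.realG t ⋆ M.K.J ⋆ M.realG t) x) :=
  hasSum_addConvolution_addConvolution (hasMoments_realG ht).hasSum.summable M.K.summable
    (hasMoments_realG ht).hasSum.summable x

theorem realG_J_realG_nonneg (ht : M.Subcritical t) (x : Fin d → ℤ) :
    0 ≤ (M.realG t ⋆ M.K.J ⋆ M.realG t) x :=
  (hasSum_realG_J_realG ht x).nonneg fun _ =>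
    mul_nonneg (mul_nonneg (realG_nonneg t _) (M.K.nonneg _)) (realG_nonneg t _)

theorem tsum_G_J_G (ht : M.Subcritical t) (x : Fin d → ℤ) :
    ∑' p : (Fin d → ℤ) × (Fin d → ℤ),
        M.G t p.1 * ENNReal.ofReal (M.K.J p.2) * M.G t (x - p.1 - p.2) =
      ENNReal.ofReal ((M.realG t ⋆ M.K.J ⋆ M.realG t) x) := by
  have sum := hasSum_realG_J_realG ht x
  rw [← sum.tsum_eq, ENNReal.ofReal_tsum_of_nonneg
    (fun _ => mul_nonneg (mul_nonneg (realG_nonneg t _) (M.K.nonneg _)) (realG_nonneg t _))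
    sum.summable]
  refine tsum_congr fun p => ?_
  rw [ENNReal.ofReal_mul (mul_nonneg (realG_nonneg t _) (M.K.nonneg _)),
    ENNReal.ofReal_mul (realG_nonneg t _), ofReal_realG ht, ofReal_realG ht]

/-- Enlarging both two-point functions in (I.1) to `G_b` makes the bound uniform on `[0, b]`. -/
theorem realG_sub_le (hb : M.Subcritical b) (hs : 0 ≤ s) (hst : s ≤ t) (htb : t ≤ b)
    (x : Fin d → ℤ) :
    M.realG t x - M.realG s x ≤ (t - s) * (M.realG b ⋆ M.K.J ⋆ M.realG b) x := by
  have ht := hb.of_le (hs.trans hst) htb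
  have increment_nonneg := mul_nonneg (sub_nonneg.2 hst) (realG_J_realG_nonneg hb x)
  rw [sub_le_iff_le_add', ← ENNReal.ofReal_le_ofReal_iff
    (add_nonneg (realG_nonneg s x) increment_nonneg), ENNReal.ofReal_add (realG_nonneg s x)
    increment_nonneg, ENNReal.ofReal_mul (sub_nonneg.2 hst), ofReal_realG ht,
    ofReal_realG (ht.of_le hs hst), ← tsum_G_J_G hb]
  refine (M.I1 hs hst ht.lt_βc x).trans ?_
  gcongr
  · exact M.mono _ hs (hst.trans htb) hb.lt_βc.le
  · exact M.mono _ ht.nonneg htb hb.lt_βc.le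

theorem abs_realG_sub_le (hb : M.Subcritical b) (hs : s ∈ Icc 0 b) (ht : t ∈ Icc 0 b)
    (x : Fin d → ℤ) :
    |M.realG s x - M.realG t x| ≤ (M.realG b ⋆ M.K.J ⋆ M.realG b) x * |s - t| := by
  wlog hts : t ≤ s generalizing s t
  · rw [abs_sub_comm, abs_sub_comm s t]
    exact this ht hs (le_of_not_ge hts)
  rw [abs_of_nonneg (sub_nonneg.2 (realG_le_realG ht.1 hts (hb.of_le hs.1 hs.2) x)),
    abs_of_nonneg (sub_nonneg.2 hts), mul_comm]
  exact realG_sub_le hb ht.1 hts hs.2 x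

theorem hasDerivWithinAt_realG (ht : M.Subcritical t) (x : Fin d → ℤ) :
    HasDerivWithinAt (fun r => M.realG r x) (M.G' t x) (Ici 0) t :=
  M.deriv x ht.nonneg ht.lt_βc

theorem G'_mem_Icc (ht : M.Subcritical t) (ht0 : 0 < t) (x : Fin d → ℤ) :
    M.G' t x ∈ Icc 0 ((M.realG t ⋆ M.K.J ⋆ M.realG t) x) := by
  have left_slopes : Tendsto (slope (fun r => M.realG r x) t) (𝓝[<] t) (𝓝 (M.G' t x)) :=
    (hasDerivWithinAt_iff_tendsto_slope' self_notMem_Iio).1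
      ((hasDerivWithinAt_realG ht x).hasDerivAt (Ici_mem_nhds ht0)).hasDerivWithinAt
  refine isClosed_Icc.mem_of_tendsto left_slopes ?_
  filter_upwards [Ioo_mem_nhdsLT ht0] with s hs
  have ht_s : 0 < t - s := sub_pos.2 hs.2
  rw [slope_comm, slope_def_field]
  exact ⟨div_nonneg (sub_nonneg.2 (realG_le_realG hs.1.le hs.2.le ht x)) ht_s.le,
    (div_le_iff₀' ht_s).2 (realG_sub_le ht hs.1.le hs.2.le le_rfl x)⟩

theorem addConvolution_J_sub_H_le_G' (ht : M.Subcritical t) (x : Fin d → ℤ) :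
    (M.realG t ⋆ (M.K.J - M.H t) ⋆ M.realG t) x ≤ M.G' t x := by
  have hG := (hasMoments_realG ht).hasSum.summable
  have hJH := (M.K.hasMoments.sub (hasMoments_H ht)).hasSum.summable
  rw [← (hasSum_addConvolution_addConvolution hG hJH hG x).tsum_eq]
  exact M.I2 ht.nonneg ht.lt_βc x

section Weighted

variable {w : (Fin d → ℤ) → ℝ}

theorem hasDerivWithinAt_tsum_mul_realG (hw : ∀ x, 0 ≤ w x) (hb : M.Subcritical b)
    (ht : t ∈ Icc 0 b) (hG : Summable fun x => w x * M.realG t x)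
    (hGJG : Summable fun x => w x * (M.realG b ⋆ M.K.J ⋆ M.realG b) x) :
    HasDerivWithinAt (fun r => ∑' x, w x * M.realG r x) (∑' x, w x * M.G' t x) (Icc 0 b) t := by
  refine hasDerivWithinAt_tsum_of_lipschitz hGJG hG (fun x => ?_) fun x r hr => ?_
  · exact ((hasDerivWithinAt_realG (hb.of_le ht.1 ht.2) x).mono Icc_subset_Ici_self).const_mul _
  · rw [← mul_sub, abs_mul, abs_of_nonneg (hw x), mul_assoc]
    exact mul_le_mul_of_nonneg_left (abs_realG_sub_le hb hr ht x) (hw x)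

theorem tsum_mul_G'_mem_Icc (hw : ∀ x, 0 ≤ w x) (ht : M.Subcritical t) (ht0 : 0 < t) {l u : ℝ}
    (hl : HasSum (fun x => w x * (M.realG t ⋆ (M.K.J - M.H t) ⋆ M.realG t) x) l)
    (hu : HasSum (fun x => w x * (M.realG t ⋆ M.K.J ⋆ M.realG t) x) u) :
    ∑' x, w x * M.G' t x ∈ Icc l u := by
  have upper (x) : w x * M.G' t x ≤ w x * (M.realG t ⋆ M.K.J ⋆ M.realG t) x :=
    mul_le_mul_of_nonneg_left (G'_mem_Icc ht ht0 x).2 (hw x)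
  have sum : HasSum (fun x => w x * M.G' t x) _ :=
    (Summable.of_nonneg_of_le (fun x => mul_nonneg (hw x) (G'_mem_Icc ht ht0 x).1) upper
      hu.summable).hasSum
  exact ⟨hasSum_le (fun x => mul_le_mul_of_nonneg_left (addConvolution_J_sub_H_le_G' ht x) (hw x))
    hl sum, hasSum_le upper sum hu⟩

end Weighted

theorem hasMoments_realG_J_realG (ht : M.Subcritical t) :
    HasMoments sqNorm (M.realG t ⋆ M.K.J ⋆ M.realG t) (M.realChi t ^ 2)
      (M.sigma ^ 2 * M.realChi t ^ 2 + 2 * M.realChi t * M.secondMomentG t) := by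
  simpa only [one_mul, mul_one, sigma] using
    (hasMoments_realG ht).addConvolution_addConvolution isSquaredNorm_sqNorm M.K.hasMoments

theorem hasMoments_realG_J_sub_H_realG (ht : M.Subcritical t) :
    HasMoments sqNorm (M.realG t ⋆ (M.K.J - M.H t) ⋆ M.realG t)
      ((1 - M.massH t) * M.realChi t ^ 2)
      ((M.sigma ^ 2 - M.secondMomentH t) * M.realChi t ^ 2 +
        2 * (1 - M.massH t) * M.realChi t * M.secondMomentG t) :=
  (hasMoments_realG ht).addConvolution_addConvolution isSquaredNorm_sqNorm
    (M.K.hasMoments.sub (hasMoments_H ht))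

theorem hasDerivWithinAt_realChi (hb : M.Subcritical b) (ht : t ∈ Icc 0 b) :
    HasDerivWithinAt M.realChi (∑' x, M.G' t x) (Icc 0 b) t := by
  change HasDerivWithinAt (fun r => ∑' x, M.realG r x) _ _ _
  simpa only [one_mul] using
    hasDerivWithinAt_tsum_mul_realG (w := fun _ => 1) (fun _ => zero_le_one) hb ht
      (by simpa only [one_mul] using (hasMoments_realG (hb.of_le ht.1 ht.2)).hasSum.summable)
      (by simpa only [one_mul] using (hasMoments_realG_J_realG hb).hasSum.summable)

theorem hasDerivWithinAt_secondMomentG (hb : M.Subcritical b) (ht : t ∈ Icc 0 b) :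
    HasDerivWithinAt M.secondMomentG (∑' x, sqNorm x * M.G' t x) (Icc 0 b) t :=
  hasDerivWithinAt_tsum_mul_realG isSquaredNorm_sqNorm.nonneg hb ht
    (hasMoments_realG (hb.of_le ht.1 ht.2)).hasSum_mul.summable
    (hasMoments_realG_J_realG hb).hasSum_mul.summable

theorem hasDerivWithinAt_secondMomentF (hb : M.Subcritical b) (ht : t ∈ Icc 0 b) :
    HasDerivWithinAt M.secondMomentF
      (M.sigma ^ 2 * ∑' x, M.G' t x + ∑' x, sqNorm x * M.G' t x) (Icc 0 b) t :=
  (((hasDerivWithinAt_realChi hb ht).const_mul _).add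
    (hasDerivWithinAt_secondMomentG hb ht)).congr_of_mem
    (fun _ hr => secondMomentF_eq (hb.of_le hr.1 hr.2)) ht

theorem tsum_G'_mem_Icc (ht : M.Subcritical t) (ht0 : 0 < t) :
    ∑' x, M.G' t x ∈ Icc ((1 - M.massH t) * M.realChi t ^ 2) (M.realChi t ^ 2) := by
  simpa only [one_mul] using
    tsum_mul_G'_mem_Icc (w := fun _ => 1) (fun _ => zero_le_one) ht ht0
      (by simpa only [one_mul] using (hasMoments_realG_J_sub_H_realG ht).hasSum)
      (by simpa only [one_mul] using (hasMoments_realG_J_realG ht).hasSum)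

theorem tsum_sqNorm_mul_G'_mem_Icc (ht : M.Subcritical t) (ht0 : 0 < t) :
    ∑' x, sqNorm x * M.G' t x ∈
      Icc ((M.sigma ^ 2 - M.secondMomentH t) * M.realChi t ^ 2 +
          2 * (1 - M.massH t) * M.realChi t * M.secondMomentG t)
        (M.sigma ^ 2 * M.realChi t ^ 2 + 2 * M.realChi t * M.secondMomentG t) :=
  tsum_mul_G'_mem_Icc isSquaredNorm_sqNorm.nonneg ht ht0
    (hasMoments_realG_J_sub_H_realG ht).hasSum_mul (hasMoments_realG_J_realG ht).hasSum_mul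

theorem isPosDiffOn_realChi (hb : M.Subcritical b) : IsPosDiffOn M.realChi 0 b :=
  .of_hasDerivWithinAt (fun _ => hasDerivWithinAt_realChi hb)
    fun _ ht => realChi_pos (hb.of_le ht.1 ht.2)

theorem isPosDiffOn_secondMomentF (hb : M.Subcritical b) : IsPosDiffOn M.secondMomentF 0 b :=
  .of_hasDerivWithinAt (fun _ => hasDerivWithinAt_secondMomentF hb)
    fun _ ht => secondMomentF_pos (hb.of_le ht.1 ht.2)

theorem logDeriv_realChi_mem_Icc (hb : M.Subcritical b) (ht : t ∈ Ioo 0 b) :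
    logDeriv M.realChi t ∈ Icc ((1 - M.localError t) * M.realChi t) (M.realChi t) := by
  have ht' := hb.of_le ht.1.le ht.2.le
  have chi_pos := realChi_pos ht'
  obtain ⟨lower, upper⟩ := tsum_G'_mem_Icc ht' ht.1
  have massH_le : M.massH t ≤ M.localError t := le_add_of_nonneg_right <|
    div_nonneg (secondMomentH_nonneg t) (div_pos (secondMomentF_pos ht') chi_pos).le
  rw [logDeriv_apply, ((hasDerivWithinAt_realChi hb (Ioo_subset_Icc_self ht)).hasDerivAt
    (Icc_mem_nhds ht.1 ht.2)).deriv, mem_Icc, le_div_iff₀ chi_pos, div_le_iff₀ chi_pos]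
  exact ⟨by nlinarith [mul_le_mul_of_nonneg_right massH_le (sq_nonneg (M.realChi t))],
    by linarith⟩

theorem logDeriv_secondMomentF_mem_Icc (hb : M.Subcritical b) (ht : t ∈ Ioo 0 b) :
    logDeriv M.secondMomentF t ∈
      Icc (2 * ((1 - M.localError t) * M.realChi t)) (2 * M.realChi t) := by
  have ht' := hb.of_le ht.1.le ht.2.le
  have moment_pos := secondMomentF_pos ht'
  obtain ⟨lowerChi, upperChi⟩ := tsum_G'_mem_Icc ht' ht.1
  obtain ⟨lowerG, upperG⟩ := tsum_sqNorm_mul_G'_mem_Icc ht' ht.1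
  have sigma_sq : 0 ≤ M.sigma ^ 2 := sq_nonneg _
  have lowerChi' := mul_le_mul_of_nonneg_left lowerChi sigma_sq
  have upperChi' := mul_le_mul_of_nonneg_left upperChi sigma_sq
  have localError_mul : M.localError t * M.realChi t * M.secondMomentF t =
      M.massH t * M.realChi t * M.secondMomentF t + M.secondMomentH t * M.realChi t ^ 2 := by
    have := (realChi_pos ht').ne'
    rw [localError]
    field_simp
  have massH_mul : 0 ≤ M.massH t * (M.sigma ^ 2 * M.realChi t ^ 2) :=
    mul_nonneg (massH_nonneg t) (mul_nonneg sigma_sq (sq_nonneg _))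
  have secondMomentH_mul : 0 ≤ M.secondMomentH t * M.realChi t ^ 2 :=
    mul_nonneg (secondMomentH_nonneg t) (sq_nonneg _)
  rw [logDeriv_apply, ((hasDerivWithinAt_secondMomentF hb (Ioo_subset_Icc_self ht)).hasDerivAt
    (Icc_mem_nhds ht.1 ht.2)).deriv, mem_Icc, le_div_iff₀ moment_pos, div_le_iff₀ moment_pos]
  rw [secondMomentF_eq ht'] at localError_mul ⊢
  constructor <;> linarith

theorem logDeriv_ratio_mem_Icc (hb : M.Subcritical b) (ht : t ∈ Ioo 0 b) {e : ℝ} (he : e < 1)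
    (hle : M.localError t ≤ e) :
    logDeriv (fun r => M.secondMomentF r / M.realChi r) t ∈
      Icc ((1 - 2 * e) * logDeriv M.realChi t) ((1 + e) / (1 - e) * logDeriv M.realChi t) := by
  have he' : 0 < 1 - e := sub_pos.2 he
  have chi_pos := realChi_pos (hb.of_le ht.1.le ht.2.le)
  obtain ⟨lowerChi, upperChi⟩ := logDeriv_realChi_mem_Icc hb ht
  obtain ⟨lowerF, upperF⟩ := logDeriv_secondMomentF_mem_Icc hb ht
  have lower_le : (1 - e) * M.realChi t ≤ (1 - M.localError t) * M.realChi t :=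
    mul_le_mul_of_nonneg_right (sub_le_sub_left hle 1) chi_pos.le
  have chi_le : M.realChi t ≤ logDeriv M.realChi t / (1 - e) :=
    (le_div_iff₀' he').2 (lower_le.trans lowerChi)
  rw [(isPosDiffOn_secondMomentF hb).logDeriv_div (isPosDiffOn_realChi hb) ht]
  constructor
  · linarith [mul_le_mul_of_nonneg_left upperChi he'.le]
  · have exponent : (1 + e) / (1 - e) * logDeriv M.realChi t =
        2 * (logDeriv M.realChi t / (1 - e)) - logDeriv M.realChi t := by
      field_simp
      ring
    linarith

theorem inv_chi_sub_inv_chi_eq_ofReal (ha : M.Subcritical a) (hb : M.Subcritical b) :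
    (M.chi a)⁻¹ - (M.chi b)⁻¹ = ENNReal.ofReal ((M.realChi a)⁻¹ - (M.realChi b)⁻¹) := by
  rw [ENNReal.ofReal_sub _ (inv_pos.2 (realChi_pos hb)).le,
    ENNReal.ofReal_inv_of_pos (realChi_pos ha), ENNReal.ofReal_inv_of_pos (realChi_pos hb),
    chi_eq_ofReal ha, chi_eq_ofReal hb]

theorem rpow_chi_div_eq_ofReal (ha : M.Subcritical a) (hb : M.Subcritical b) (c : ℝ) :
    (M.chi a / M.chi b) ^ c = ENNReal.ofReal ((M.realChi a / M.realChi b) ^ c) := by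
  rw [← ENNReal.ofReal_rpow_of_pos (div_pos (realChi_pos ha) (realChi_pos hb)),
    ENNReal.ofReal_div_of_pos (realChi_pos hb), chi_eq_ofReal ha, chi_eq_ofReal hb]

theorem toReal_E_lt_one (hE : M.E b < 1) : (M.E b).toReal < 1 := by
  simpa using ENNReal.toReal_strict_mono ENNReal.one_ne_top hE

theorem mul_one_sub_E_le_inv_chi_sub_inv_chi (hb : M.Subcritical b) (ha : 0 ≤ a) (hab : a ≤ b) :
    ENNReal.ofReal (b - a) * (1 - M.E b) ≤ (M.chi a)⁻¹ - (M.chi b)⁻¹ := by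
  obtain hE | hE := le_or_gt 1 (M.E b)
  · rw [tsub_eq_zero_of_le hE, mul_zero]
    exact zero_le
  have one_sub_E : 1 - M.E b = ENNReal.ofReal (1 - (M.E b).toReal) := by
    rw [ENNReal.ofReal_sub _ ENNReal.toReal_nonneg, ENNReal.ofReal_toReal hE.ne_top,
      ENNReal.ofReal_one]
  rw [one_sub_E, ← ENNReal.ofReal_mul (sub_nonneg.2 hab),
    inv_chi_sub_inv_chi_eq_ofReal (hb.of_le ha hab) hb, mul_comm]
  refine ENNReal.ofReal_le_ofReal
    (((isPosDiffOn_realChi hb).mono_left ha).mul_sub_le_inv_sub_inv hab fun t ht => ?_)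
  have ht' := Ioo_subset_Ioo_left ha ht
  have error_le := localError_le_toReal_E hb ht'.1.le ht'.2.le hE.ne_top
  refine le_trans ?_ (logDeriv_realChi_mem_Icc hb ht').1
  exact mul_le_mul_of_nonneg_right (sub_le_sub_left error_le 1)
    (realChi_pos (hb.of_le ht'.1.le ht'.2.le)).le

theorem inv_chi_sub_inv_chi_le (hb : M.Subcritical b) (ha : 0 ≤ a) (hab : a ≤ b) :
    (M.chi a)⁻¹ - (M.chi b)⁻¹ ≤ ENNReal.ofReal (b - a) := by
  rw [inv_chi_sub_inv_chi_eq_ofReal (hb.of_le ha hab) hb, ← one_mul (b - a)]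
  refine ENNReal.ofReal_le_ofReal
    (((isPosDiffOn_realChi hb).mono_left ha).inv_sub_inv_le_mul_sub hab fun t ht => ?_)
  rw [one_mul]
  exact (logDeriv_realChi_mem_Icc hb (Ioo_subset_Ioo_left ha ht)).2

theorem logDeriv_ratio_mem_Icc_toReal_E (hb : M.Subcritical b) (ha : 0 ≤ a) (hE : M.E b < 1)
    (ht : t ∈ Ioo a b) :
    logDeriv (fun r => M.secondMomentF r / M.realChi r) t ∈
      Icc ((1 - 2 * (M.E b).toReal) * logDeriv M.realChi t)
        ((1 + (M.E b).toReal) / (1 - (M.E b).toReal) * logDeriv M.realChi t) :=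
  have ht' := Ioo_subset_Ioo_left ha ht
  logDeriv_ratio_mem_Icc hb ht' (toReal_E_lt_one hE)
    (localError_le_toReal_E hb ht'.1.le ht'.2.le hE.ne_top)

theorem rpow_chi_div_le_sq_xi_div (hb : M.Subcritical b) (ha : 0 ≤ a) (hab : a ≤ b)
    (hE : M.E b < 1) :
    (M.chi a / M.chi b) ^ ((1 + (M.E b).toReal) / (1 - (M.E b).toReal)) ≤
      ENNReal.ofReal ((M.xi a / M.xi b) ^ 2) := by
  have hχ := (isPosDiffOn_realChi hb).mono_left ha
  have hF := (isPosDiffOn_secondMomentF hb).mono_left ha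
  rw [rpow_chi_div_eq_ofReal (hb.of_le ha hab) hb, sq_xi_div (hb.of_le ha hab) hb]
  exact ENNReal.ofReal_le_ofReal <| (hF.div hχ).div_rpow_le_div hab hχ fun t ht =>
    (logDeriv_ratio_mem_Icc_toReal_E hb ha hE ht).2

theorem sq_xi_div_le_rpow_chi_div (hb : M.Subcritical b) (ha : 0 ≤ a) (hab : a ≤ b)
    (hE : M.E b < 1) :
    ENNReal.ofReal ((M.xi a / M.xi b) ^ 2) ≤
      (M.chi a / M.chi b) ^ (1 - 2 * (M.E b).toReal) := by
  have hχ := (isPosDiffOn_realChi hb).mono_left ha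
  have hF := (isPosDiffOn_secondMomentF hb).mono_left ha
  rw [rpow_chi_div_eq_ofReal (hb.of_le ha hab) hb, sq_xi_div (hb.of_le ha hab) hb]
  exact ENNReal.ofReal_le_ofReal <| (hF.div hχ).div_le_div_rpow hab hχ fun t ht =>
    (logDeriv_ratio_mem_Icc_toReal_E hb ha hE ht).1

theorem xi_le_xi (hb : M.Subcritical b) (ha : 0 ≤ a) (hab : a ≤ b) (hE : M.E b ≤ 1 / 2) :
    M.xi a ≤ M.xi b := by
  have hE1 : M.E b < 1 := hE.trans_lt (one_div (2 : ℝ≥0∞) ▸ ENNReal.one_half_lt_one)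
  have exponent_nonneg : 0 ≤ 1 - 2 * (M.E b).toReal := by
    have : (M.E b).toReal ≤ 1 / 2 := by simpa using ENNReal.toReal_mono (by simp) hE
    linarith
  have chi_le : M.chi a ≤ M.chi b := ENNReal.tsum_le_tsum fun x => M.mono x ha hab hb.lt_βc.le
  have sq_le_one : ENNReal.ofReal ((M.xi a / M.xi b) ^ 2) ≤ 1 :=
    (sq_xi_div_le_rpow_chi_div hb ha hab hE1).trans
      (ENNReal.rpow_le_one (ENNReal.div_le_of_le_mul (by rwa [one_mul])) exponent_nonneg)
  rw [ENNReal.ofReal_le_one, sq_le_one_iff_abs_le_one] at sq_le_one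
  exact (div_le_one (xi_pos hb)).1 ((le_abs_self _).trans sq_le_one)

end Model

end Blackbox

theorem statement13_general {d : ℕ} {c₀ : ℝ} (M : Model d c₀) {β' β : ℝ} (hβ'0 : 0 ≤ β')
    (hβ'β : β' ≤ β) (hβ : ENNReal.ofReal β < M.βc) :
    (ENNReal.ofReal (β - β') * (1 - M.E β) ≤ (M.chi β')⁻¹ - (M.chi β)⁻¹ ∧
      (M.chi β')⁻¹ - (M.chi β)⁻¹ ≤ ENNReal.ofReal (β - β')) ∧
    (M.E β < 1 →
      (M.chi β' / M.chi β) ^ ((1 + (M.E β).toReal) / (1 - (M.E β).toReal)) ≤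
          ENNReal.ofReal ((M.xi β' / M.xi β) ^ 2) ∧
        ENNReal.ofReal ((M.xi β' / M.xi β) ^ 2) ≤
          (M.chi β' / M.chi β) ^ ((1:ℝ) - 2 * (M.E β).toReal)) ∧
    (M.E β ≤ 1/2 → M.xi β' ≤ M.xi β) :=
  have subcritical : M.Subcritical β := ⟨hβ'0.trans hβ'β, hβ⟩
  ⟨⟨Model.mul_one_sub_E_le_inv_chi_sub_inv_chi subcritical hβ'0 hβ'β,
      Model.inv_chi_sub_inv_chi_le subcritical hβ'0 hβ'β⟩,
    fun hE => ⟨Model.rpow_chi_div_le_sq_xi_div subcritical hβ'0 hβ'β hE,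
      Model.sq_xi_div_le_rpow_chi_div subcritical hβ'0 hβ'β hE⟩,
    Model.xi_le_xi subcritical hβ'0 hβ'β⟩

/-- integrated differential inequalities (`prop: rough bounds chi xi`). -/
theorem statement13 (d : ℕ) (hd : 2 < d) (c₀ : ℝ) (hc₀ : c₀ ∈ Set.Ioc (0:ℝ) 1)
    (M : Model d c₀) (β' β : ℝ) (hβ'0 : 0 ≤ β') (hβ'β : β' ≤ β)
    (hβ : ENNReal.ofReal β < M.βc) :
    (ENNReal.ofReal (β - β') * (1 - M.E β) ≤ (M.chi β')⁻¹ - (M.chi β)⁻¹ ∧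
      (M.chi β')⁻¹ - (M.chi β)⁻¹ ≤ ENNReal.ofReal (β - β')) ∧
    (M.E β < 1 →
      (M.chi β' / M.chi β) ^ ((1 + (M.E β).toReal) / (1 - (M.E β).toReal)) ≤
          ENNReal.ofReal ((M.xi β' / M.xi β) ^ 2) ∧
        ENNReal.ofReal ((M.xi β' / M.xi β) ^ 2) ≤
          (M.chi β' / M.chi β) ^ ((1:ℝ) - 2 * (M.E β).toReal)) ∧
    (M.E β ≤ 1/2 → M.xi β' ≤ M.xi β) :=
  statement13_general M hβ'0 hβ'β hβ
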